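/- Assume {T_w : w ∈ S_n} is a basis of B_n, let w₀ be the longest element of S_n, and let λ : B_n → F be the F-linear functional determined by λ(T_w) = δ_{w,w₀}. Then λ(T_w T_i) = λ(T_{n−i} T_w) for all w ∈ S_n and all 1 ≤ i ≤ n−1; that is, the Nakayama automorphism of the Frobenius algebra B_n is the algebra automorphism determined by T_i ↦ T_{n−i}. -/

import Mathlib

open scoped TensorProduct

namespace HeckeLikeTower

variable (F : Type*) [Field F]

/-- The defining relations of the Hecke-like algebra of degree `n` over `F` with parameters
`c, d`.  The generators `T_1, …, T_{n-1}` are indexed by `Fin (n-1)`, where the index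
`i : Fin (n-1)` corresponds to the generator `T_{i+1}`. -/
inductive Rel (c d : F) (n : ℕ) :
    FreeAlgebra F (Fin (n - 1)) → FreeAlgebra F (Fin (n - 1)) → Prop
  | comm (i j : Fin (n - 1)) (h : (i : ℕ) + 1 < (j : ℕ)) :
      Rel c d n (FreeAlgebra.ι F i * FreeAlgebra.ι F j)
        (FreeAlgebra.ι F j * FreeAlgebra.ι F i)
  | braid (i j : Fin (n - 1)) (h : (j : ℕ) = (i : ℕ) + 1) :
      Rel c d n (FreeAlgebra.ι F i * FreeAlgebra.ι F j * FreeAlgebra.ι F i)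
        (FreeAlgebra.ι F j * FreeAlgebra.ι F i * FreeAlgebra.ι F j)
  | quad (i : Fin (n - 1)) :
      Rel c d n (FreeAlgebra.ι F i * FreeAlgebra.ι F i)
        (c • FreeAlgebra.ι F i + algebraMap F (FreeAlgebra F (Fin (n - 1))) d)

/-- The Hecke-like algebra `B_n` of degree `n` over `F` with parameters `c, d`: the quotient
of the free associative unital `F`-algebra on `T_1, …, T_{n-1}` by the two-sided ideal
generated by the relations. -/
abbrev B (c d : F) (n : ℕ) : Type _ := RingQuot (Rel F c d n)

/-- The generator `T_{i+1}` of the Hecke-like algebra `B_n` (for `i : Fin (n-1)`). -/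
def T (c d : F) (n : ℕ) (i : Fin (n - 1)) : B F c d n :=
  RingQuot.mkAlgHom F (Rel F c d n) (FreeAlgebra.ι F i)

/-- The adjacent transposition `s_{i+1} = (i+1, i+2) ∈ S_n` (for `i : Fin (n-1)`), acting on
`Fin n` by swapping `i` and `i+1` (`0`-based). -/
def s (n : ℕ) (i : Fin (n - 1)) : Equiv.Perm (Fin n) :=
  Equiv.swap ⟨(i : ℕ), lt_of_lt_of_le i.isLt (Nat.sub_le n 1)⟩
    ⟨(i : ℕ) + 1, by have := i.isLt; omega⟩

/-- The product in `S_n` of the adjacent transpositions along a word. -/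
def wordProd (n : ℕ) (l : List (Fin (n - 1))) : Equiv.Perm (Fin n) :=
  (l.map (s n)).prod

/-- The product `T_{i_1} ⋯ T_{i_r}` in `B_n` along a word `(i_1, …, i_r)`. -/
def Tword (c d : F) (n : ℕ) (l : List (Fin (n - 1))) : B F c d n :=
  (l.map (T F c d n)).prod

/-- `l` is a reduced word for the permutation `w ∈ S_n`: the corresponding product of
adjacent transpositions is `w`, and `l` has minimal length among all such words (its length
is then the Coxeter length `ℓ(w)`). -/
def IsReducedWord (n : ℕ) (w : Equiv.Perm (Fin n)) (l : List (Fin (n - 1))) : Prop :=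
  wordProd n l = w ∧
    ∀ l' : List (Fin (n - 1)), wordProd n l' = w → l.length ≤ l'.length

/-- The Coxeter length `ℓ(w)` of `w ∈ S_n` with respect to the adjacent transpositions. -/
noncomputable def len (n : ℕ) (w : Equiv.Perm (Fin n)) : ℕ :=
  sInf {r | ∃ l : List (Fin (n - 1)), wordProd n l = w ∧ l.length = r}

end HeckeLikeTower

open HeckeLikeTower

namespace HeckeLikeTower

noncomputable section Aux

variable {F : Type*} [Field F]

/-- Action of a generator on the regular module. -/
def op (c d : F) {n : ℕ} (x y : Fin n) :
    (Equiv.Perm (Fin n) →₀ F) →ₗ[F] (Equiv.Perm (Fin n) →₀ F) :=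
  Finsupp.linearCombination F (fun w : Equiv.Perm (Fin n) =>
    if w⁻¹ x < w⁻¹ y then Finsupp.single (Equiv.swap x y * w) (1 : F)
    else c • Finsupp.single w (1 : F) + d • Finsupp.single (Equiv.swap x y * w) (1 : F))

lemma op_single (c d : F) {n : ℕ} (x y : Fin n) (w : Equiv.Perm (Fin n)) :
    op c d x y (Finsupp.single w 1) =
    if w⁻¹ x < w⁻¹ y then Finsupp.single (Equiv.swap x y * w) (1 : F)
    else c • Finsupp.single w (1 : F) + d • Finsupp.single (Equiv.swap x y * w) (1 : F) := by
  simp [op]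

lemma op_ext {n : ℕ} {f g : (Equiv.Perm (Fin n) →₀ F) →ₗ[F] (Equiv.Perm (Fin n) →₀ F)}
    (h : ∀ w, f (Finsupp.single w 1) = g (Finsupp.single w 1)) : f = g := by
  apply Finsupp.lhom_ext'
  intro w
  ext1
  simpa using h w

lemma swap_inv_app {n : ℕ} (x y z : Fin n) (w : Equiv.Perm (Fin n)) :
    (Equiv.swap x y * w)⁻¹ z = w⁻¹ (Equiv.swap x y z) := by
  simp [mul_inv_rev, Equiv.Perm.mul_apply]

lemma op_quad (c d : F) {n : ℕ} (x y : Fin n) (hxy : x ≠ y) :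
    op c d x y * op c d x y = c • op c d x y + algebraMap F _ d := by
  apply op_ext
  intro w
  have hne : w⁻¹ x ≠ w⁻¹ y := fun h => hxy (w⁻¹.injective h)
  have hss : Equiv.swap x y * (Equiv.swap x y * w) = w := by
    rw [← mul_assoc, Equiv.swap_mul_self, one_mul]
  simp only [Module.End.mul_apply, LinearMap.add_apply, LinearMap.smul_apply,
    Module.algebraMap_end_apply]
  rcases lt_or_gt_of_ne hne with h | h
  · simp only [op_single, swap_inv_app, Equiv.swap_apply_left, Equiv.swap_apply_right, h,
      not_lt_of_gt h, if_true, if_false, hss]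
  · simp only [op_single, swap_inv_app, Equiv.swap_apply_left, Equiv.swap_apply_right, h,
      not_lt_of_gt h, if_true, if_false, hss, map_add, map_smul]

lemma op_comm (c d : F) {n : ℕ} (x y z t : Fin n) (hxy : x ≠ y) (hzt : z ≠ t)
    (hxz : x ≠ z) (hxt : x ≠ t) (hyz : y ≠ z) (hyt : y ≠ t) :
    op c d x y * op c d z t = op c d z t * op c d x y := by
  apply op_ext
  intro w
  have hcomm : Equiv.swap x y * (Equiv.swap z t * w) = Equiv.swap z t * (Equiv.swap x y * w) := by
    rw [← mul_assoc, ← mul_assoc]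
    congr 1
    ext a
    simp only [Equiv.Perm.mul_apply, Equiv.swap_apply_def]
    split_ifs <;> simp_all
  simp only [Module.End.mul_apply]
  by_cases h1 : w⁻¹ x < w⁻¹ y <;> by_cases h2 : w⁻¹ z < w⁻¹ t <;>
  simp only [op_single, swap_inv_app, h1, h2, if_true, if_false, map_add, map_smul,
    Equiv.swap_apply_of_ne_of_ne hxz hxt, Equiv.swap_apply_of_ne_of_ne hyz hyt,
    Equiv.swap_apply_of_ne_of_ne hxz.symm hyz.symm,
    Equiv.swap_apply_of_ne_of_ne hxt.symm hyt.symm, hcomm] <;> module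

lemma op_braid (c d : F) {n : ℕ} (x y z : Fin n) (hxy : x ≠ y) (hyz : y ≠ z) (hxz : x ≠ z) :
    op c d x y * op c d y z * op c d x y = op c d y z * op c d x y * op c d y z := by
  apply op_ext
  intro w
  have hss : ∀ v : Equiv.Perm (Fin n), Equiv.swap x y * (Equiv.swap x y * v) = v := fun v => by
    rw [← mul_assoc, Equiv.swap_mul_self, one_mul]
  have htt : ∀ v : Equiv.Perm (Fin n), Equiv.swap y z * (Equiv.swap y z * v) = v := fun v => by
    rw [← mul_assoc, Equiv.swap_mul_self, one_mul]
  have hst : ∀ v : Equiv.Perm (Fin n), Equiv.swap x y * (Equiv.swap y z * (Equiv.swap x y * v)) =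
      Equiv.swap y z * (Equiv.swap x y * (Equiv.swap y z * v)) := fun v => by
    rw [← mul_assoc, ← mul_assoc, ← mul_assoc, ← mul_assoc]
    congr 1
    ext a
    simp only [Equiv.Perm.mul_apply, Equiv.swap_apply_def]
    split_ifs <;> simp_all
  have n1 : w⁻¹ x ≠ w⁻¹ y := fun h => hxy (w⁻¹.injective h)
  have n2 : w⁻¹ y ≠ w⁻¹ z := fun h => hyz (w⁻¹.injective h)
  have n3 : w⁻¹ x ≠ w⁻¹ z := fun h => hxz (w⁻¹.injective h)
  simp only [Module.End.mul_apply]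
  rcases lt_or_gt_of_ne n1 with h1 | h1 <;> rcases lt_or_gt_of_ne n2 with h2 | h2 <;>
  rcases lt_or_gt_of_ne n3 with h3 | h3 <;>
  first
  | exact absurd (h1.trans h2) (not_lt_of_gt h3)
  | exact absurd (h2.trans h1) (not_lt_of_gt h3)
  | (simp only [op_single, swap_inv_app, h1, h2, h3, not_lt_of_gt h1, not_lt_of_gt h2,
      not_lt_of_gt h3, if_true, if_false, map_add, map_smul,
      Equiv.swap_apply_left, Equiv.swap_apply_right,
      Equiv.swap_apply_of_ne_of_ne hxy hxz,
      Equiv.swap_apply_of_ne_of_ne hxz.symm hyz.symm, hst, hss, htt] <;> module)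

/-- Lower and upper index of a simple transposition. -/
def lo {n : ℕ} (i : Fin (n - 1)) : Fin n := ⟨(i : ℕ), lt_of_lt_of_le i.isLt (Nat.sub_le n 1)⟩
/-- Upper index. -/
def hi {n : ℕ} (i : Fin (n - 1)) : Fin n := ⟨(i : ℕ) + 1, by have := i.isLt; omega⟩

lemma s_eq {n : ℕ} (i : Fin (n - 1)) : s n i = Equiv.swap (lo i) (hi i) := rfl

lemma lo_ne_hi {n : ℕ} (i : Fin (n - 1)) : lo i ≠ hi i := by
  simp [lo, hi, Fin.ext_iff]

/-- The regular representation. -/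
def rep (c d : F) (n : ℕ) : B F c d n →ₐ[F] Module.End F (Equiv.Perm (Fin n) →₀ F) :=
  RingQuot.liftAlgHom F ⟨FreeAlgebra.lift F (fun i : Fin (n - 1) => op c d (lo i) (hi i)), by
    intro a b h
    cases h with
    | comm i j h =>
      simp only [map_mul, FreeAlgebra.lift_ι_apply]
      apply op_comm <;> simp [lo, hi, Fin.ext_iff] <;> omega
    | braid i j h =>
      have : lo j = hi i := by simp [lo, hi, h]
      simp only [map_mul, FreeAlgebra.lift_ι_apply, this]
      apply op_braid <;> simp [lo, hi, Fin.ext_iff] <;> omega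
    | quad i =>
      simp only [map_mul, map_add, map_smul, FreeAlgebra.lift_ι_apply, AlgHom.commutes]
      exact op_quad c d _ _ (lo_ne_hi i)⟩

lemma rep_T (c d : F) (n : ℕ) (i : Fin (n - 1)) :
    rep c d n (T F c d n i) = op c d (lo i) (hi i) := by
  simp [rep, T]

lemma T_quad (c d : F) (n : ℕ) (i : Fin (n - 1)) :
    T F c d n i * T F c d n i = c • T F c d n i + algebraMap F _ d := by
  have := RingQuot.mkAlgHom_rel F (Rel.quad (F := F) (c := c) (d := d) (n := n) i)
  simpa [T] using this

/-- Inversion set. -/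
def invSet {n : ℕ} (w : Equiv.Perm (Fin n)) : Finset (Fin n × Fin n) :=
  Finset.univ.filter (fun p => p.1 < p.2 ∧ w p.2 < w p.1)

lemma mem_invSet {n : ℕ} (w : Equiv.Perm (Fin n)) (a b : Fin n) :
    (a, b) ∈ invSet w ↔ a < b ∧ w b < w a := by simp [invSet]

/-- Inversion number. -/
def inv {n : ℕ} (w : Equiv.Perm (Fin n)) : ℕ := (invSet w).card

lemma s_mul_s {n : ℕ} (i : Fin (n - 1)) (w : Equiv.Perm (Fin n)) : s n i * (s n i * w) = w := by
  rw [← mul_assoc, s_eq, Equiv.swap_mul_self, one_mul]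

lemma s_lt {n : ℕ} (i : Fin (n - 1)) (x y : Fin n) (h1 : ¬ (x = lo i ∧ y = hi i))
    (h2 : ¬ (x = hi i ∧ y = lo i)) : s n i x < s n i y ↔ x < y := by
  simp only [s_eq, Equiv.swap_apply_def]
  simp only [Fin.ext_iff, lo, hi] at *
  split_ifs <;> simp only [Fin.lt_def] <;> omega

lemma inv_asc {n : ℕ} (i : Fin (n - 1)) (w : Equiv.Perm (Fin n)) (h : w⁻¹ (lo i) < w⁻¹ (hi i)) :
    inv (s n i * w) = inv w + 1 := by
  have hlh : lo i < hi i := by simp [lo, hi, Fin.lt_def]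
  have : invSet (s n i * w) = insert (w⁻¹ (lo i), w⁻¹ (hi i)) (invSet w) := by
    ext ⟨a, b⟩
    rw [Finset.mem_insert, mem_invSet, mem_invSet]
    simp only [Prod.mk.injEq, Equiv.Perm.mul_apply, Equiv.Perm.eq_inv_iff_eq]
    by_cases h1 : w b = lo i ∧ w a = hi i
    · have hb : b = w⁻¹ (lo i) := by rw [← h1.1]; simp
      have ha : a = w⁻¹ (hi i) := by rw [← h1.2]; simp
      have hab : b < a := by rw [ha, hb]; exact h
      have := hlh.ne
      simp [h1.1, h1.2, not_lt_of_gt hab, this.symm]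
    · by_cases h2 : w b = hi i ∧ w a = lo i
      · have hb : b = w⁻¹ (hi i) := by rw [← h2.1]; simp
        have ha : a = w⁻¹ (lo i) := by rw [← h2.2]; simp
        have hab : a < b := by rw [ha, hb]; exact h
        simp [h2.1, h2.2, hab, s_eq, hlh]
      · rw [s_lt i _ _ h1 h2]
        tauto
  rw [inv, this, Finset.card_insert_of_notMem, inv]
  simp [invSet, hlh.le]

lemma inv_desc {n : ℕ} (i : Fin (n - 1)) (w : Equiv.Perm (Fin n))
    (h : w⁻¹ (hi i) < w⁻¹ (lo i)) : inv w = inv (s n i * w) + 1 := by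
  have := inv_asc i (s n i * w) (by
    rw [s_eq, swap_inv_app, swap_inv_app]; simpa using h)
  rwa [s_mul_s] at this

lemma asc_or_desc {n : ℕ} (i : Fin (n - 1)) (w : Equiv.Perm (Fin n)) :
    w⁻¹ (lo i) < w⁻¹ (hi i) ∨ w⁻¹ (hi i) < w⁻¹ (lo i) :=
  lt_or_gt_of_ne fun h => lo_ne_hi i (w⁻¹.injective h)

lemma inv_le {n : ℕ} (i : Fin (n - 1)) (w : Equiv.Perm (Fin n)) :
    inv (s n i * w) ≤ inv w + 1 := by
  rcases asc_or_desc i w with h | h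
  · exact (inv_asc i w h).le
  · have := inv_desc i w h; omega

lemma wordProd_cons {n : ℕ} (i : Fin (n - 1)) (l : List (Fin (n - 1))) :
    wordProd n (i :: l) = s n i * wordProd n l := by simp [wordProd]

lemma inv_one {n : ℕ} : inv (1 : Equiv.Perm (Fin n)) = 0 := by
  simp only [inv, invSet, Finset.card_eq_zero, Finset.filter_eq_empty_iff]
  rintro ⟨a, b⟩ - ⟨h1, h2⟩
  exact absurd h1 (not_lt_of_gt h2)

lemma inv_wordProd_le {n : ℕ} (l : List (Fin (n - 1))) : inv (wordProd n l) ≤ l.length := by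
  induction l with
  | nil => simp [wordProd, inv_one]
  | cons i l ih =>
    rw [wordProd_cons, List.length_cons]
    have := inv_le i (wordProd n l)
    omega

lemma strictMono_of_adj {n : ℕ} (f : Fin n → Fin n)
    (h : ∀ i : Fin (n - 1), f (lo i) < f (hi i)) : StrictMono f := by
  cases n with
  | zero => intro a; exact a.elim0
  | succ m =>
    rw [Fin.strictMono_iff_lt_succ]
    intro i
    exact h i

lemma eq_one_of_adj {n : ℕ} (w : Equiv.Perm (Fin n))
    (h : ∀ i : Fin (n - 1), w (lo i) < w (hi i)) : w = 1 := by
  have hm : StrictMono w := strictMono_of_adj w h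
  have : (hm.orderIsoOfSurjective w w.surjective) = OrderIso.refl (Fin n) := Subsingleton.elim _ _
  ext a
  have := congrArg (fun f => (f a : Fin n)) this
  simpa [Fin.ext_iff] using this

lemma exists_word {n : ℕ} (k : ℕ) (w : Equiv.Perm (Fin n)) (hk : inv w = k) :
    ∃ l, wordProd n l = w ∧ l.length = k := by
  induction k generalizing w with
  | zero =>
    refine ⟨[], ?_, rfl⟩
    have : w⁻¹ = 1 := by
      apply eq_one_of_adj
      intro i
      rcases asc_or_desc i w with h | h
      · exact h
      · have := inv_desc i w h; omega
    simp [wordProd, inv_eq_one.mp this]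
  | succ k ih =>
    by_cases hd : ∃ i, w⁻¹ (hi i) < w⁻¹ (lo i)
    · obtain ⟨i, h⟩ := hd
      have := inv_desc i w h
      obtain ⟨l, h1, h2⟩ := ih (s n i * w) (by omega)
      exact ⟨i :: l, by rw [wordProd_cons, h1, s_mul_s], by simp [h2]⟩
    · have : w⁻¹ = 1 := by
        apply eq_one_of_adj
        intro i
        rcases asc_or_desc i w with h | h
        · exact h
        · exact absurd ⟨i, h⟩ hd
      rw [inv_eq_one.mp this, inv_one] at hk
      omega

lemma len_eq {n : ℕ} (w : Equiv.Perm (Fin n)) : len n w = inv w := by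
  apply le_antisymm
  · obtain ⟨l, h1, h2⟩ := exists_word _ w rfl
    exact Nat.sInf_le ⟨l, h1, h2⟩
  · obtain ⟨l, h1, h2⟩ := exists_word _ w rfl
    refine le_csInf ⟨inv w, l, h1, h2⟩ ?_
    rintro r ⟨l', rfl, rfl⟩
    exact inv_wordProd_le l'

lemma reduced_length {n : ℕ} (w : Equiv.Perm (Fin n)) (l : List (Fin (n - 1)))
    (h : IsReducedWord n w l) : l.length = inv w := by
  apply le_antisymm
  · obtain ⟨l', h1, h2⟩ := exists_word _ w rfl
    rw [← h2]; exact h.2 l' h1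
  · rw [← h.1]; exact inv_wordProd_le l

lemma inv_inv_eq {n : ℕ} (w : Equiv.Perm (Fin n)) : inv w⁻¹ = inv w := by
  have key : ∀ v : Equiv.Perm (Fin n), inv v⁻¹ ≤ inv v := by
    intro v
    apply Finset.card_le_card_of_injOn (fun p => (v⁻¹ p.2, v⁻¹ p.1))
    · rintro ⟨a, b⟩ h
      simpa [invSet, and_comm] using h
    · rintro ⟨a, b⟩ - ⟨a', b'⟩ - h
      simp at h
      simp [h]
  apply le_antisymm (key w)
  simpa using key w⁻¹

lemma Tword_cons (c d : F) {n : ℕ} (i : Fin (n - 1)) (l : List (Fin (n - 1))) :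
    Tword F c d n (i :: l) = T F c d n i * Tword F c d n l := by simp [Tword]

lemma rep_Tword (c d : F) {n : ℕ} (l : List (Fin (n - 1))) (h : l.length = inv (wordProd n l)) :
    rep c d n (Tword F c d n l) (Finsupp.single 1 1) = Finsupp.single (wordProd n l) 1 := by
  induction l with
  | nil => simp [Tword, wordProd]
  | cons i l ih =>
    rw [wordProd_cons, List.length_cons] at h
    have h1 := inv_le i (wordProd n l)
    have h2 := inv_wordProd_le l
    rw [Tword_cons, map_mul, Module.End.mul_apply, ih (by omega), rep_T, op_single, wordProd_cons,
      s_eq]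
    rw [if_pos]
    rcases asc_or_desc i (wordProd n l) with h' | h'
    · exact h'
    · have := inv_desc i _ h'
      omega

lemma Tword_eq (c d : F) {n : ℕ} (word : Equiv.Perm (Fin n) → List (Fin (n - 1)))
    (hword : ∀ w, IsReducedWord n w (word w))
    (hspan : Submodule.span F
      (Set.range (fun w : Equiv.Perm (Fin n) => Tword F c d n (word w))) = ⊤)
    (l : List (Fin (n - 1))) (h : l.length = inv (wordProd n l)) :
    Tword F c d n l = Tword F c d n (word (wordProd n l)) := by
  let φ : B F c d n →ₗ[F] (Equiv.Perm (Fin n) →₀ F) :=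
    (LinearMap.applyₗ (Finsupp.single 1 1)).comp (rep c d n).toLinearMap
  let ψ : (Equiv.Perm (Fin n) →₀ F) →ₗ[F] B F c d n :=
    Finsupp.linearCombination F (fun w => Tword F c d n (word w))
  have hφ : ∀ l : List (Fin (n - 1)), l.length = inv (wordProd n l) →
      φ (Tword F c d n l) = Finsupp.single (wordProd n l) 1 := fun l hl => rep_Tword c d l hl
  have hψ : ∀ w, ψ (Finsupp.single w 1) = Tword F c d n (word w) := fun w => by simp [ψ]
  have hid : ψ.comp φ = LinearMap.id := by
    apply LinearMap.ext_on hspan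
    rintro _ ⟨w, rfl⟩
    have hl := reduced_length w _ (hword w)
    have hp := (hword w).1
    simp only [LinearMap.comp_apply, LinearMap.id_apply]
    rw [hφ _ (by rw [hp]; exact hl), hp, hψ]
  have := LinearMap.congr_fun hid (Tword F c d n l)
  simp only [LinearMap.comp_apply, LinearMap.id_apply] at this
  rw [← this, hφ l h, hψ]

lemma w0_eq {n : ℕ} (w₀ : Equiv.Perm (Fin n)) (h : ∀ w : Equiv.Perm (Fin n), inv w ≤ inv w₀) : w₀ = Fin.revPerm := by
  have : w₀⁻¹ * Fin.revPerm = 1 := by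
    apply eq_one_of_adj
    intro i
    let j : Fin (n - 1) := ⟨n - 2 - i, by have := i.isLt; omega⟩
    have h1 : Fin.revPerm (lo i) = hi j := by
      have := i.isLt
      simp [Fin.ext_iff, lo, hi, j]; omega
    have h2 : Fin.revPerm (hi i) = lo j := by
      have := i.isLt
      simp [Fin.ext_iff, lo, hi, j]; omega
    rw [Equiv.Perm.mul_apply, Equiv.Perm.mul_apply, h1, h2]
    rcases asc_or_desc j w₀ with h' | h'
    · have := inv_asc j w₀ h'
      have := h (s n j * w₀)
      omega
    · exact h'
  exact (inv_mul_eq_one.mp this)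

lemma s_rev {n : ℕ} (i j : Fin (n - 1)) (h : (j : ℕ) = n - 2 - i) :
    s n j * Fin.revPerm = Fin.revPerm * s n i := by
  have := i.isLt
  have h1 : Fin.revPerm (lo i) = hi j := by
    simp [Fin.ext_iff, lo, hi]; omega
  have h2 : Fin.revPerm (hi i) = lo j := by
    simp [Fin.ext_iff, lo, hi]; omega
  rw [s_eq, s_eq, Equiv.mul_swap_eq_swap_mul, h1, h2, Equiv.swap_comm]

lemma wordProd_concat {n : ℕ} (i : Fin (n - 1)) (l : List (Fin (n - 1))) :
    wordProd n (l ++ [i]) = wordProd n l * s n i := by simp [wordProd]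

lemma Tword_concat (c d : F) {n : ℕ} (i : Fin (n - 1)) (l : List (Fin (n - 1))) :
    Tword F c d n (l ++ [i]) = Tword F c d n l * T F c d n i := by simp [Tword]

lemma inv_left_cases {n : ℕ} (i : Fin (n - 1)) (w : Equiv.Perm (Fin n)) :
    inv (s n i * w) = inv w + 1 ∨ inv w = inv (s n i * w) + 1 := by
  rcases asc_or_desc i w with h | h
  · exact Or.inl (inv_asc i w h)
  · exact Or.inr (inv_desc i w h)

lemma inv_mul_s {n : ℕ} (i : Fin (n - 1)) (w : Equiv.Perm (Fin n)) :
    inv (w * s n i) = inv (s n i * w⁻¹) := by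
  rw [← inv_inv_eq, mul_inv_rev, s_eq, Equiv.swap_inv]

lemma inv_right_cases {n : ℕ} (i : Fin (n - 1)) (w : Equiv.Perm (Fin n)) :
    inv (w * s n i) = inv w + 1 ∨ inv w = inv (w * s n i) + 1 := by
  rw [inv_mul_s, ← inv_inv_eq w]
  exact inv_left_cases i w⁻¹

end Aux

end HeckeLikeTower

/-- assume `{T_w : w ∈ S_n}` is a basis of `B_n`, let `w₀` be the longest
element of `S_n` and `λ : B_n → F` the linear functional with `λ(T_w) = δ_{w,w₀}`.  Then
`λ(T_w T_i) = λ(T_{n−i} T_w)` for all `w ∈ S_n` and `1 ≤ i ≤ n−1`; i.e. the Nakayama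
automorphism of `B_n` is determined by `T_i ↦ T_{n−i}`.  (Here the generator `T_i` is
`T F c d n j` with `i = j + 1`, so `T_{n-i}` has index `n - 2 - j`.) -/
theorem heckeLike_nakayama (F : Type*) [Field F] (c d : F) (n : ℕ) (hn : 0 < n)
    (word : Equiv.Perm (Fin n) → List (Fin (n - 1)))
    (hword : ∀ w, IsReducedWord n w (word w))
    (hindep : LinearIndependent F (fun w : Equiv.Perm (Fin n) => Tword F c d n (word w)))
    (hspan : Submodule.span F
      (Set.range (fun w : Equiv.Perm (Fin n) => Tword F c d n (word w))) = ⊤)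
    (w₀ : Equiv.Perm (Fin n)) (hw₀ : ∀ w, len n w ≤ len n w₀)
    (lam : B F c d n →ₗ[F] F)
    (hlam : ∀ w : Equiv.Perm (Fin n),
      lam (Tword F c d n (word w)) = if w = w₀ then 1 else 0) :
    ∀ (w : Equiv.Perm (Fin n)) (j : Fin (n - 1)),
      lam (Tword F c d n (word w) * T F c d n j) =
      lam (T F c d n ⟨n - 2 - (j : ℕ), by have := j.isLt; omega⟩ * Tword F c d n (word w)) := by
  intro w j
  have hlen : ∀ w, inv w ≤ inv w₀ := fun w => by rw [← len_eq, ← len_eq]; exact hw₀ w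
  have hrl : ∀ w, (word w).length = inv w := fun w => reduced_length w _ (hword w)
  have hrp : ∀ w, wordProd n (word w) = w := fun w => (hword w).1
  have hT := Tword_eq c d word hword hspan
  have hss : ∀ i : Fin (n - 1), s n i * s n i = 1 := fun i => by
    rw [s_eq, Equiv.swap_mul_self]
  have right_up : ∀ (w : Equiv.Perm (Fin n)) (i : Fin (n - 1)), inv (w * s n i) = inv w + 1 →
      Tword F c d n (word w) * T F c d n i = Tword F c d n (word (w * s n i)) := by
    intro w i h
    have hp : wordProd n (word w ++ [i]) = w * s n i := by rw [wordProd_concat, hrp]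
    rw [← Tword_concat, hT, hp]
    rw [hp, h, List.length_append, hrl, List.length_singleton]
  have left_up : ∀ (w : Equiv.Perm (Fin n)) (i : Fin (n - 1)), inv (s n i * w) = inv w + 1 →
      T F c d n i * Tword F c d n (word w) = Tword F c d n (word (s n i * w)) := by
    intro w i h
    have hp : wordProd n (i :: word w) = s n i * w := by rw [wordProd_cons, hrp]
    rw [← Tword_cons, hT, hp]
    rw [hp, h, List.length_cons, hrl]
  have right_val : ∀ (w : Equiv.Perm (Fin n)) (i : Fin (n - 1)),
      lam (Tword F c d n (word w) * T F c d n i) =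
        (if w = w₀ then c else 0) + (if w * s n i = w₀ then 1 else 0) := by
    intro w i
    rcases inv_right_cases i w with h | h
    · have hne : w ≠ w₀ := by
        rintro rfl
        have := hlen (w * s n i)
        omega
      rw [right_up w i h, hlam, if_neg hne, zero_add]
    · have hne : w * s n i ≠ w₀ := by
        intro h'
        have := hlen w
        rw [← h'] at this
        omega
      have hw : w * s n i * s n i = w := by rw [mul_assoc, hss, mul_one]
      have h1 := right_up (w * s n i) i (by rw [hw]; exact h)
      rw [hw] at h1
      rw [← h1, mul_assoc, T_quad, mul_add, mul_smul_comm, h1, ← Algebra.commutes,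
        ← Algebra.smul_def, map_add, map_smul, map_smul, hlam, hlam, if_neg hne]
      simp
  have left_val : ∀ (w : Equiv.Perm (Fin n)) (i : Fin (n - 1)),
      lam (T F c d n i * Tword F c d n (word w)) =
        (if w = w₀ then c else 0) + (if s n i * w = w₀ then 1 else 0) := by
    intro w i
    rcases inv_left_cases i w with h | h
    · have hne : w ≠ w₀ := by
        rintro rfl
        have := hlen (s n i * w)
        omega
      rw [left_up w i h, hlam, if_neg hne, zero_add]
    · have hne : s n i * w ≠ w₀ := by
        intro h'
        have := hlen w
        rw [← h'] at this
        omega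
      have h1 := left_up (s n i * w) i (by rw [s_mul_s]; exact h)
      rw [s_mul_s] at h1
      rw [← h1, ← mul_assoc, T_quad, add_mul, smul_mul_assoc, h1,
        ← Algebra.smul_def, map_add, map_smul, map_smul, hlam, hlam, if_neg hne]
      simp
  rw [right_val, left_val]
  have hw0 := w0_eq w₀ hlen
  have hsr := s_rev j ⟨n - 2 - (j : ℕ), by have := j.isLt; omega⟩ rfl
  rw [← hw0] at hsr
  have hiff : w * s n j = w₀ ↔ s n ⟨n - 2 - (j : ℕ), by have := j.isLt; omega⟩ * w = w₀ := by
    constructor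
    · intro h
      have : w = w₀ * s n j := by rw [← h, mul_assoc, hss, mul_one]
      rw [this, ← hsr, s_mul_s]
    · intro h
      have : w = s n ⟨n - 2 - (j : ℕ), by have := j.isLt; omega⟩ * w₀ := by rw [← h, s_mul_s]
      rw [this, hsr, mul_assoc, hss, mul_one]
  simp only [hiff]
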